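/- arXiv:1807.00379 — 5 statements merged into one kernel-verified Lean document; each statement's English description precedes it below -/
import Mathlib

section
/- The dual cone of SDD^n equals the set of symmetric n×n matrices all of whose 2×2 principal submatrices are positive semidefinite; that is, (SDD^n)* = {Q ∈ S^n : ι_{ij}*(Q) ⪰ 0 for all 1 ≤ i < j ≤ n}, where ι_{ij}*(Q) denotes the 2×2 submatrix of Q formed by rows and columns i and j. -/
open Matrix Set

noncomputable section

/-- The embedding `ι_{ij} : S² → Sⁿ` placing a 2×2 symmetric matrix into
rows/columns `i, j` with zeros elsewhere. -/
def iota {n : ℕ} (i j : Fin n) (S : Matrix (Fin 2) (Fin 2) ℝ) :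
    Matrix (Fin n) (Fin n) ℝ :=
  Matrix.of fun r s =>
    (if r = i ∧ s = i then S 0 0 else 0) +
    (if r = i ∧ s = j then S 0 1 else 0) +
    (if r = j ∧ s = i then S 1 0 else 0) +
    (if r = j ∧ s = j then S 1 1 else 0)

/-- The cone `SDDⁿ = Σ_{i<j} ι_{ij}(S²₊)` of scaled diagonally dominant matrices. -/
def SDD (n : ℕ) : Set (Matrix (Fin n) (Fin n) ℝ) :=
  {X | ∃ S : Fin n → Fin n → Matrix (Fin 2) (Fin 2) ℝ,
    (∀ i j : Fin n, (S i j).PosSemidef) ∧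
    X = ∑ i : Fin n, ∑ j : Fin n, if i < j then iota i j (S i j) else 0}

/-- Dual cone within the space of symmetric matrices, w.r.t. the trace inner product. -/
def dualCone {n : ℕ} (C : Set (Matrix (Fin n) (Fin n) ℝ)) :
    Set (Matrix (Fin n) (Fin n) ℝ) :=
  {Y | Y.IsSymm ∧ ∀ X ∈ C, 0 ≤ (X * Y).trace}

/-!
For the trace form, `iota i j` is adjoint to taking the principal submatrix on rows and columns
`i, j`. As `SDD n` is generated by the images `iota i j S` of positive semidefinite `S`, a symmetric
`Q` lies in its dual iff each of these submatrices lies in the dual of the positive semidefinite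
cone; and that cone is self-dual.
-/

section SelfDuality

open scoped ComplexOrder MatrixOrder

variable {𝕜 m : Type*} [RCLike 𝕜] [Fintype m] {A B : Matrix m m 𝕜}

theorem trace_mul_nonneg_of_posSemidef (hA : A.PosSemidef) (hB : B.PosSemidef) :
    0 ≤ (A * B).trace := by
  classical
  obtain ⟨C, rfl⟩ := CStarAlgebra.nonneg_iff_eq_star_mul_self.mp hA.nonneg
  calc 0 ≤ (C * B * Cᴴ).trace := (hB.mul_mul_conjTranspose_same C).trace_nonneg
    _ = (star C * C * B).trace := by rw [star_eq_conjTranspose, trace_mul_cycle]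

theorem posSemidef_iff_forall_trace_mul_nonneg (hA : A.IsHermitian) :
    A.PosSemidef ↔ ∀ S : Matrix m m 𝕜, S.PosSemidef → 0 ≤ (S * A).trace := by
  refine ⟨fun h S hS => trace_mul_nonneg_of_posSemidef hS h, fun h => ?_⟩
  refine .of_dotProduct_mulVec_nonneg hA fun x => ?_
  calc 0 ≤ (vecMulVec x (star x) * A).trace := h _ (posSemidef_vecMulVec_self_star x)
    _ = star x ⬝ᵥ A *ᵥ x := by
      rw [vecMulVec_mul, trace_vecMulVec, dotProduct_comm, dotProduct_mulVec]

end SelfDuality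

section Iota

variable {n : ℕ}

theorem iota_eq_sum_single (i j : Fin n) (S : Matrix (Fin 2) (Fin 2) ℝ) :
    iota i j S =
      single i i (S 0 0) + single i j (S 0 1) + single j i (S 1 0) + single j j (S 1 1) := by
  ext r s
  simp only [iota, of_apply, Matrix.add_apply, single_apply, eq_comm]

theorem iota_zero (i j : Fin n) : iota i j 0 = 0 := by
  simp [iota_eq_sum_single]

theorem trace_iota_mul (i j : Fin n) (S : Matrix (Fin 2) (Fin 2) ℝ)
    (Q : Matrix (Fin n) (Fin n) ℝ) :
    (iota i j S * Q).trace = (S * Q.submatrix ![i, j] ![i, j]).trace := by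
  simp only [iota_eq_sum_single, add_mul, trace_add, trace_single_mul, trace_fin_two, mul_apply,
    Fin.sum_univ_two, submatrix_apply, cons_val_zero, cons_val_one]
  ring

theorem iota_mem_SDD {i j : Fin n} (hij : i < j) {S : Matrix (Fin 2) (Fin 2) ℝ}
    (hS : S.PosSemidef) : iota i j S ∈ SDD n := by
  refine ⟨fun k l => if k = i then if l = j then S else 0 else 0, fun k l => ?_, ?_⟩
  · dsimp only
    split_ifs
    exacts [hS, .zero, .zero]
  · have term_eq (k l : Fin n) :
        (if k < l then iota k l (if k = i then if l = j then S else 0 else 0) else 0) =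
          if k = i then if l = j then iota i j S else 0 else 0 := by
      by_cases hk : k = i <;> by_cases hl : l = j <;> simp [hk, hl, hij, iota_zero]
    simp [term_eq]

theorem mem_dualCone_SDD_iff {Q : Matrix (Fin n) (Fin n) ℝ} :
    Q ∈ dualCone (SDD n) ↔
      Q.IsSymm ∧ ∀ i j : Fin n, i < j →
        ∀ S : Matrix (Fin 2) (Fin 2) ℝ, S.PosSemidef → 0 ≤ (iota i j S * Q).trace := by
  refine and_congr_right fun _ => ⟨fun h i j hij S hS => h _ (iota_mem_SDD hij hS), ?_⟩
  rintro h _ ⟨S, hS, rfl⟩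
  simp only [Finset.sum_mul, trace_sum, ite_mul, zero_mul]
  refine Finset.sum_nonneg fun i _ => Finset.sum_nonneg fun j _ => ?_
  split_ifs with hij
  · exact h i j hij _ (hS i j)
  · exact (trace_zero _ _).ge

end Iota

/-- `(SDDⁿ)* = {Q ∈ Sⁿ : ι_{ij}*(Q) ⪰ 0 for all 1 ≤ i < j ≤ n}`. -/
theorem dual_SDD (n : ℕ) :
    dualCone (SDD n) =
      {Q | Q.IsSymm ∧ ∀ i j : Fin n, i < j →
        (!![Q i i, Q i j; Q j i, Q j j]).PosSemidef} := by
  ext Q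
  rw [mem_dualCone_SDD_iff]
  refine and_congr_right fun hQ => forall₃_congr fun i j _ => ?_
  have principal_eq : !![Q i i, Q i j; Q j i, Q j j] = Q.submatrix ![i, j] ![i, j] :=
    (eta_fin_two (Q.submatrix ![i, j] ![i, j])).symm
  have principal_isHermitian : (Q.submatrix ![i, j] ![i, j]).IsHermitian :=
    isHermitian_iff_isSymm.mpr (hQ.submatrix _)
  simp only [trace_iota_mul, principal_eq]
  exact (posSemidef_iff_forall_trace_mul_nonneg principal_isHermitian).symm

end
end

section
/- The cone of nonnegative scaled diagonally dominant matrices decomposes as SDD^n_+ = Σ_{1≤i<j≤n} ι_{ij}(S²₊ ∩ N²); that is, a symmetric n×n matrix is entrywise nonnegative and scaled diagonally dominant if and only if it is a sum over pairs 1 ≤ i < j ≤ n of embeddings of 2×2 positive semidefinite entrywise nonnegative matrices. -/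
open Matrix Set

noncomputable section

/-- `Nⁿ`: symmetric entrywise nonnegative matrices. -/
def NonnegMat (n : ℕ) : Set (Matrix (Fin n) (Fin n) ℝ) :=
  {X | X.IsSymm ∧ ∀ i j, 0 ≤ X i j}

/-! Two distinct blocks `ι_{ij}`, `ι_{kl}` with `i < j` and `k < l` can only overlap on the
diagonal, so the `(i, j)` entry of `Σ_{i<j} ι_{ij}(S_{ij})` is the off-diagonal entry of `S_{ij}`
alone. If the sum is entrywise nonnegative, so is that entry, and the diagonal of a positive
semidefinite block is nonnegative anyway: any decomposition into blocks of `S²₊` is already one into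
blocks of `S²₊ ∩ N²`. -/

section PosSemidef

variable {ι R : Type*} [LinearOrder ι] [Ring R] [PartialOrder R] [StarRing R] [StarOrderedRing R]

lemma posSemidef_apply_nonneg_of_upper_nonneg {A : Matrix ι ι R} (hA : A.PosSemidef)
    (h_upper : ∀ a b, a < b → 0 ≤ A a b) (a b : ι) : 0 ≤ A a b := by
  rcases lt_trichotomy a b with hab | rfl | hba
  · exact h_upper a b hab
  · exact hA.diag_nonneg
  · rw [← hA.isHermitian.apply a b, star_nonneg_iff]
    exact h_upper b a hba

end PosSemidef

/-- The cone `Nⁿ` as an additive submonoid, which gives access to `sum_mem`. -/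
def nonnegMatAddSubmonoid (n : ℕ) : AddSubmonoid (Matrix (Fin n) (Fin n) ℝ) where
  carrier := NonnegMat n
  zero_mem' := ⟨isSymm_zero, fun _ _ => le_rfl⟩
  add_mem' hX hY := ⟨hX.1.add hY.1, fun r s => add_nonneg (hX.2 r s) (hY.2 r s)⟩

/-- The sum `Σ_{i<j} ι_{ij}(S_{ij})` of embedded blocks. The blocks `S i j` with `j ≤ i` are
ignored. -/
def iotaSum {n : ℕ} (S : Fin n → Fin n → Matrix (Fin 2) (Fin 2) ℝ) : Matrix (Fin n) (Fin n) ℝ :=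
  ∑ i : Fin n, ∑ j : Fin n, if i < j then iota i j (S i j) else 0

section Blocks

variable {n : ℕ} {i j : Fin n}

lemma transpose_iota (S : Matrix (Fin 2) (Fin 2) ℝ) : (iota i j S)ᵀ = iota i j Sᵀ := by
  ext r s
  simp only [iota, transpose_apply, of_apply, and_comm, add_right_comm]

lemma iota_mem_nonnegMat {S : Matrix (Fin 2) (Fin 2) ℝ} (hS : S ∈ NonnegMat 2) :
    iota i j S ∈ NonnegMat n := by
  refine ⟨by rw [IsSymm, transpose_iota, hS.1.eq], fun r s => ?_⟩
  have ite_nonneg (p : Prop) [Decidable p] (a b : Fin 2) : 0 ≤ if p then S a b else 0 := by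
    split_ifs
    exacts [hS.2 a b, le_rfl]
  simp only [iota, of_apply]
  exact add_nonneg (add_nonneg (add_nonneg (ite_nonneg ..) (ite_nonneg ..)) (ite_nonneg ..))
    (ite_nonneg ..)

lemma iota_apply_of_lt {r s : Fin n} (hij : i < j) (hrs : r < s) (S : Matrix (Fin 2) (Fin 2) ℝ) :
    iota i j S r s = if r = i ∧ s = j then S 0 1 else 0 := by
  have not_ii : ¬(r = i ∧ s = i) := by omega
  have not_ji : ¬(r = j ∧ s = i) := by omega
  have not_jj : ¬(r = j ∧ s = j) := by omega
  simp only [iota, of_apply, not_ii, not_ji, not_jj, if_false, zero_add, add_zero]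

variable {S T : Fin n → Fin n → Matrix (Fin 2) (Fin 2) ℝ}

lemma iotaSum_congr (h : ∀ i j, i < j → S i j = T i j) : iotaSum S = iotaSum T :=
  Finset.sum_congr rfl fun i _ => Finset.sum_congr rfl fun j _ =>
    if_ctx_congr Iff.rfl (fun hij => congrArg (iota i j) (h i j hij)) fun _ => rfl

lemma iotaSum_mem_nonnegMat (hS : ∀ i j, i < j → S i j ∈ NonnegMat 2) :
    iotaSum S ∈ NonnegMat n := by
  refine sum_mem (S := nonnegMatAddSubmonoid n) fun i _ => sum_mem fun j _ => ?_
  split_ifs with hij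
  exacts [iota_mem_nonnegMat (hS i j hij), zero_mem _]

lemma iotaSum_apply_of_lt (S : Fin n → Fin n → Matrix (Fin 2) (Fin 2) ℝ) (hij : i < j) :
    iotaSum S i j = S i j 0 1 := by
  have block_apply (k l : Fin n) : (if k < l then iota k l (S k l) else 0 : Matrix _ _ ℝ) i j =
      if i = k then if j = l then S k l 0 1 else 0 else 0 := by
    rw [← ite_and]
    split_ifs with hkl h_eq h_eq
    · rw [iota_apply_of_lt hkl hij, if_pos h_eq]
    · rw [iota_apply_of_lt hkl hij, if_neg h_eq]
    · exact absurd (h_eq.1 ▸ h_eq.2 ▸ hij) hkl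
    · rfl
  simp only [iotaSum, Matrix.sum_apply, block_apply, Finset.sum_ite_eq, Finset.sum_ite_irrel,
    Finset.sum_const_zero, Finset.mem_univ, if_true]

lemma block_apply_nonneg_of_iotaSum_apply_nonneg (hij : i < j) (hS : (S i j).PosSemidef)
    (h_sum : 0 ≤ iotaSum S i j) (a b : Fin 2) : 0 ≤ S i j a b := by
  refine posSemidef_apply_nonneg_of_upper_nonneg hS (fun a b hab => ?_) a b
  obtain ⟨rfl, rfl⟩ : a = 0 ∧ b = 1 := by omega
  exact h_sum.trans_eq (iotaSum_apply_of_lt S hij)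

end Blocks

/-- `SDDⁿ₊ = Σ_{1≤i<j≤n} ι_{ij}(S²₊ ∩ N²)`. -/
theorem SDDplus_decomp (n : ℕ) :
    SDD n ∩ NonnegMat n =
      {X | ∃ S : Fin n → Fin n → Matrix (Fin 2) (Fin 2) ℝ,
        (∀ i j : Fin n, (S i j).PosSemidef ∧ ∀ a b, 0 ≤ S i j a b) ∧
        X = ∑ i : Fin n, ∑ j : Fin n, if i < j then iota i j (S i j) else 0} := by
  ext X
  constructor
  · rintro ⟨⟨S, hS, rfl⟩, -, h_sum⟩
    refine ⟨fun i j => if i < j then S i j else 0, fun i j => ?_,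
      iotaSum_congr fun i j hij => (if_pos hij).symm⟩
    beta_reduce
    split_ifs with hij
    · exact ⟨hS i j, block_apply_nonneg_of_iotaSum_apply_nonneg hij (hS i j) (h_sum i j)⟩
    · exact ⟨.zero, fun _ _ => le_rfl⟩
  · rintro ⟨S, hS, rfl⟩
    exact ⟨⟨S, fun i j => (hS i j).1, rfl⟩,
      iotaSum_mem_nonnegMat fun i j _ => ⟨isHermitian_iff_isSymm.mp (hS i j).1.1, (hS i j).2⟩⟩

end
end

section
/- Let U ∈ R^{t×n} have nonnegative entries with each row summing to 1. Then SDD^n_+(U) := U^T (SDD^t_+) U is a closed convex sub-cone of the completely positive cone CP^n. -/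
open Matrix Set

noncomputable section

/-- `SDDⁿ₊ = SDDⁿ ∩ Nⁿ`. -/
def SDDplus (n : ℕ) : Set (Matrix (Fin n) (Fin n) ℝ) := SDD n ∩ NonnegMat n

/-- `SDDⁿ₊(U) = Uᵀ (SDDᵗ₊) U`. -/
def SDDplusU {t n : ℕ} (U : Matrix (Fin t) (Fin n) ℝ) :
    Set (Matrix (Fin n) (Fin n) ℝ) :=
  {X | ∃ Y ∈ SDDplus t, X = Uᵀ * Y * U}

/-- The conic hull: finite nonnegative combinations of elements of `s`. -/
def conicHull {α : Type*} [AddCommMonoid α] [Module ℝ α] (s : Set α) : Set α :=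
  {x | ∃ (N : ℕ) (c : Fin N → ℝ) (v : Fin N → α),
    (∀ k, 0 ≤ c k) ∧ (∀ k, v k ∈ s) ∧ x = ∑ k, c k • v k}

/-- The completely positive cone `CPⁿ`. -/
def CP (n : ℕ) : Set (Matrix (Fin n) (Fin n) ℝ) :=
  {X | ∃ (k : ℕ) (B : Matrix (Fin k) (Fin n) ℝ), (∀ i j, 0 ≤ B i j) ∧ X = Bᵀ * B}

/-!
Let `u_i` be the rows of `U`. Each off-diagonal position `(i, j)` is met by only one summand
`ι_{ij}(S_{ij})` of a matrix in `SDD`, so the sum is entrywise nonnegative exactly when every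
`S_{ij}` is doubly nonnegative. Hence `SDDᵗ₊(U)` is the sum over `i < j` of the images of the doubly
nonnegative `2 × 2` cone under congruence by the rows `u_i, u_j`.

A doubly nonnegative `2 × 2` matrix has a nonnegative Cholesky factor, which gives complete
positivity. For closedness, nonnegativity rules out cancellation: bounding the entry sum of a matrix
in the cone bounds every summand, and then every entry of `S_{ij}` that is not multiplied by a zero
row of `U`. The remaining entries can be set to zero, so the part of the cone with entry sum at most
`r` is contained in a compact subset of the cone.
-/

theorem isClosed_of_forall_isCompact_sublevel {E α : Type*} [TopologicalSpace E] [T2Space E]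
    [TopologicalSpace α] [LinearOrder α] [NoMaxOrder α] [OrderClosedTopology α] {g : E → α}
    (hg : Continuous g) {A : Set E}
    (h : ∀ r, ∃ K ⊆ A, IsCompact K ∧ ∀ x ∈ A, g x ≤ r → x ∈ K) : IsClosed A := by
  refine isClosed_of_closure_subset fun x hx => ?_
  obtain ⟨r, hr⟩ := exists_gt (g x)
  obtain ⟨K, hKA, hK, hAK⟩ := h r
  have hx' : x ∈ closure ({y | g y < r} ∩ A) :=
    (isOpen_lt hg continuous_const).inter_closure ⟨hr, hx⟩
  exact hKA (closure_minimal (fun y hy => hAK y hy.2 (le_of_lt hy.1)) hK.isClosed hx')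

theorem isClosed_setOf_posSemidef {m R : Type*} [Finite m] [Ring R] [PartialOrder R] [StarRing R]
    [TopologicalSpace R] [IsTopologicalSemiring R] [ContinuousStar R] [OrderClosedTopology R] :
    IsClosed {S : Matrix m m R | S.PosSemidef} := by
  have := Fintype.ofFinite m
  simp only [posSemidef_iff_dotProduct_mulVec, ofPred_and, ofPred_forall]
  exact (isClosed_eq (by fun_prop) (by fun_prop)).inter
    (isClosed_iInter fun x => isClosed_le (by fun_prop) (by fun_prop))

/-- The cone of doubly nonnegative matrices: positive semidefinite with nonnegative entries. -/
def doublyNonneg (m : Type*) : PointedCone ℝ (Matrix m m ℝ) where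
  carrier := {S | S.PosSemidef ∧ ∀ a b, 0 ≤ S a b}
  zero_mem' := ⟨.zero, fun _ _ => le_rfl⟩
  add_mem' hS hT := ⟨hS.1.add hT.1, fun a b => add_nonneg (hS.2 a b) (hT.2 a b)⟩
  smul_mem' c _ hS := ⟨hS.1.smul c.2, fun a b => mul_nonneg c.2 (hS.2 a b)⟩

theorem isCompact_setOf_mem_doublyNonneg_le {m : Type*} [Finite m] (B : Matrix m m ℝ) :
    IsCompact {S : Matrix m m ℝ | S ∈ doublyNonneg m ∧ ∀ a b, S a b ≤ B a b} := by
  let box : Set (Matrix m m ℝ) := univ.pi fun a => univ.pi fun b => Icc 0 (B a b)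
  have hbox : IsCompact box :=
    isCompact_univ_pi fun _ => isCompact_univ_pi fun _ => isCompact_Icc
  have hinter : {S : Matrix m m ℝ | S ∈ doublyNonneg m ∧ ∀ a b, S a b ≤ B a b} =
      {S | S.PosSemidef} ∩ box := by
    refine Set.ext fun S => ⟨?_, ?_⟩
    · rintro ⟨hS, hB⟩
      exact ⟨hS.1, fun a _ b _ => ⟨hS.2 a b, hB a b⟩⟩
    · rintro ⟨hS, hB⟩
      exact ⟨⟨hS, fun a b => (hB a trivial b trivial).1⟩, fun a b => (hB a trivial b trivial).2⟩
  rw [hinter]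
  exact hbox.inter_left isClosed_setOf_posSemidef

theorem sum_transpose_mul_self_mem_CP {ι κ : Type*} [Fintype ι] [Fintype κ] {n : ℕ}
    (B : ι → Matrix κ (Fin n) ℝ) (hB : ∀ p a k, 0 ≤ B p a k) : ∑ p, (B p)ᵀ * B p ∈ CP n := by
  let e := Fintype.equivFin (ι × κ)
  refine ⟨Fintype.card (ι × κ), of fun r => B (e.symm r).1 (e.symm r).2, fun r k => hB _ _ k, ?_⟩
  ext k l
  simp only [Matrix.sum_apply, mul_apply, transpose_apply, of_apply]
  rw [e.symm.sum_comp fun q => B q.1 q.2 k * B q.1 q.2 l, Fintype.sum_prod_type]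

theorem exists_nonneg_transpose_mul_self_eq {S : Matrix (Fin 2) (Fin 2) ℝ}
    (hS : S ∈ doublyNonneg (Fin 2)) :
    ∃ B : Matrix (Fin 2) (Fin 2) ℝ, (∀ a b, 0 ≤ B a b) ∧ Bᵀ * B = S := by
  obtain ⟨hpsd, hnonneg⟩ := hS
  have hsymm : S 1 0 = S 0 1 := by simpa using hpsd.isHermitian.apply 0 1
  have hdet : S 0 1 ^ 2 ≤ S 0 0 * S 1 1 := by
    have := hpsd.det_nonneg
    rw [det_fin_two, hsymm] at this
    linarith
  have hschur : S 0 1 ^ 2 / S 0 0 ≤ S 1 1 :=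
    div_le_of_le_mul₀ (hnonneg 0 0) (hnonneg 1 1) (by linarith)
  have hoff : √(S 0 0) * (S 0 1 / √(S 0 0)) = S 0 1 := by
    refine mul_div_cancel_of_imp' fun h => ?_
    rw [Real.sqrt_eq_zero (hnonneg 0 0)] at h
    simpa [h] using hdet
  have hdiag : (S 0 1 / √(S 0 0)) ^ 2 + √(S 1 1 - S 0 1 ^ 2 / S 0 0) ^ 2 = S 1 1 := by
    rw [div_pow, Real.sq_sqrt (hnonneg 0 0), Real.sq_sqrt (sub_nonneg.2 hschur)]
    ring
  -- the Cholesky factor; if `S 0 0 = 0`, the divisions by zero give the correct value `0`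
  let B : Matrix (Fin 2) (Fin 2) ℝ :=
    !![√(S 0 0), S 0 1 / √(S 0 0); 0, √(S 1 1 - S 0 1 ^ 2 / S 0 0)]
  refine ⟨B, ?_, ?_⟩
  · have := div_nonneg (hnonneg 0 1) (Real.sqrt_nonneg (S 0 0))
    intro a b
    fin_cases a <;> fin_cases b <;> simp [B, this]
  · have hmul : Bᵀ * B =
        !![√(S 0 0) ^ 2, √(S 0 0) * (S 0 1 / √(S 0 0));
          √(S 0 0) * (S 0 1 / √(S 0 0)),
          (S 0 1 / √(S 0 0)) ^ 2 + √(S 1 1 - S 0 1 ^ 2 / S 0 0) ^ 2] := by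
      ext a b
      fin_cases a <;> fin_cases b <;> simp [B, mul_apply, sq, mul_comm (_ / _) √_]
    rw [hmul, Real.sq_sqrt (hnonneg 0 0), hoff, hdiag]
    nth_rw 2 [← hsymm]
    exact (eta_fin_two S).symm

section Congruence

variable {m n ι : Type*} [Fintype m]

theorem transpose_mul_mul_mem_doublyNonneg [Finite n] {S : Matrix m m ℝ}
    (hS : S ∈ doublyNonneg m) {V : Matrix m n ℝ} (hV : ∀ a k, 0 ≤ V a k) :
    Vᵀ * S * V ∈ doublyNonneg n := by
  have := Fintype.ofFinite n
  refine ⟨by simpa using hS.1.conjTranspose_mul_mul_same V, fun k l => ?_⟩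
  simp only [mul_apply, transpose_apply]
  exact Finset.sum_nonneg fun b _ => mul_nonneg
    (Finset.sum_nonneg fun a _ => mul_nonneg (hV a k) (hS.2 a b)) (hV b l)

/-- The sum of all entries of a matrix. It is written as a quadratic form because a congruence by
`V` just replaces the vector `1` by the vector `V *ᵥ 1` of row sums. -/
def entrySum (X : Matrix m m ℝ) : ℝ := 1 ⬝ᵥ X *ᵥ 1

theorem entrySum_sum {κ : Type*} (s : Finset κ) (X : κ → Matrix m m ℝ) :
    entrySum (∑ p ∈ s, X p) = ∑ p ∈ s, entrySum (X p) := by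
  simp only [entrySum, sum_mulVec, dotProduct_sum]

theorem mulVec_nonneg_of_nonneg {R : Type*} [Semiring R] [PartialOrder R] [IsOrderedRing R]
    {V : Matrix n m R} (hV : ∀ a k, 0 ≤ V a k) {v : m → R} (hv : 0 ≤ v) : 0 ≤ V *ᵥ v :=
  fun a => dotProduct_nonneg_of_nonneg (hV a) hv

theorem entrySum_nonneg {X : Matrix m m ℝ} (hX : ∀ a b, 0 ≤ X a b) : 0 ≤ entrySum X :=
  dotProduct_nonneg_of_nonneg zero_le_one (mulVec_nonneg_of_nonneg hX zero_le_one)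

theorem rowSum_mul_apply_mul_rowSum_le_entrySum [Fintype n] {S : Matrix m m ℝ}
    (hS : ∀ a b, 0 ≤ S a b) {V : Matrix m n ℝ} (hV : ∀ a k, 0 ≤ V a k) (a b : m) :
    (V *ᵥ 1) a * (S a b * (V *ᵥ 1) b) ≤ entrySum (Vᵀ * S * V) := by
  have hσ : 0 ≤ V *ᵥ 1 := mulVec_nonneg_of_nonneg hV zero_le_one
  calc (V *ᵥ 1) a * (S a b * (V *ᵥ 1) b)
      ≤ (V *ᵥ 1) a * (S *ᵥ (V *ᵥ 1)) a := by
        refine mul_le_mul_of_nonneg_left ?_ (hσ a)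
        exact Finset.single_le_sum (f := fun b => S a b * (V *ᵥ 1) b)
          (fun b _ => mul_nonneg (hS a b) (hσ b)) (Finset.mem_univ b)
    _ ≤ (V *ᵥ 1) ⬝ᵥ S *ᵥ (V *ᵥ 1) :=
        Finset.single_le_sum (f := fun a => (V *ᵥ 1) a * (S *ᵥ (V *ᵥ 1)) a)
          (fun a _ => mul_nonneg (hσ a) (mulVec_nonneg_of_nonneg hS hσ a))
          (Finset.mem_univ a)
    _ = entrySum (Vᵀ * S * V) := by
        rw [entrySum, ← mulVec_mulVec, ← mulVec_mulVec, dotProduct_mulVec 1 Vᵀ, vecMul_transpose]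

/-- Where `V` has a zero row, the corresponding row and column of `S` do not affect `Vᵀ * S * V` and
may be arbitrarily large, so `T` erases them. As `0⁻¹ = 0`, the bound on `T` is zero there, and the
diagonal matrix of `σ * σ⁻¹`, with `σ` the row sums of `V`, does the erasing. -/
theorem exists_doublyNonneg_le_of_entrySum_le [Fintype n] {S : Matrix m m ℝ}
    (hS : S ∈ doublyNonneg m) {V : Matrix m n ℝ} (hV : ∀ a k, 0 ≤ V a k) {r : ℝ}
    (hr : entrySum (Vᵀ * S * V) ≤ r) :
    ∃ T ∈ doublyNonneg m, Vᵀ * T * V = Vᵀ * S * V ∧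
      ∀ a b, T a b ≤ r * ((V *ᵥ 1) a)⁻¹ * ((V *ᵥ 1) b)⁻¹ := by
  classical
  set σ := V *ᵥ 1 with hσdef
  have hσ : 0 ≤ σ := mulVec_nonneg_of_nonneg hV zero_le_one
  set D : Matrix m m ℝ := diagonal (σ * σ⁻¹) with hD
  have hDnonneg (a b : m) : 0 ≤ D a b := by
    rw [hD, diagonal_apply]
    split_ifs
    exacts [mul_nonneg (hσ a) (inv_nonneg.2 (hσ a)), le_rfl]
  have hDV : D * V = V := by
    ext a k
    rw [hD, diagonal_mul, Pi.mul_apply, Pi.inv_apply]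
    by_cases hσa : σ a = 0
    · have hrow : ∑ k, V a k = 0 := by simpa [hσdef, mulVec, dotProduct] using hσa
      rw [(Finset.sum_eq_zero_iff_of_nonneg fun k _ => hV a k).1 hrow k (Finset.mem_univ k),
        mul_zero]
    · rw [mul_inv_cancel₀ hσa, one_mul]
  refine ⟨Dᵀ * S * D, transpose_mul_mul_mem_doublyNonneg hS hDnonneg, ?_, fun a b => ?_⟩
  · calc Vᵀ * (Dᵀ * S * D) * V = (D * V)ᵀ * S * (D * V) := by
          simp only [transpose_mul, Matrix.mul_assoc]
      _ = Vᵀ * S * V := by rw [hDV]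
  · calc (Dᵀ * S * D) a b = σ a * (S a b * σ b) * (σ a)⁻¹ * (σ b)⁻¹ := by
          simp only [hD, diagonal_transpose, diagonal_mul, mul_diagonal, Pi.mul_apply, Pi.inv_apply]
          ring
      _ ≤ r * (σ a)⁻¹ * (σ b)⁻¹ := by
          have hσa : 0 ≤ σ a := hσ a
          have hσb : 0 ≤ σ b := hσ b
          gcongr
          exact (rowSum_mul_apply_mul_rowSum_le_entrySum hS.2 hV a b).trans hr

/-- The linear map `S ↦ ∑ p, (V p)ᵀ * S p * V p`. -/
def congruenceSum [Fintype ι] (V : ι → Matrix m n ℝ) :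
    (ι → Matrix m m ℝ) →ₗ[ℝ] Matrix n n ℝ where
  toFun S := ∑ p, (V p)ᵀ * S p * V p
  map_add' S T := by
    simp only [Pi.add_apply, Matrix.mul_add, Matrix.add_mul, Finset.sum_add_distrib]
  map_smul' c S := by
    simp only [Pi.smul_apply, Matrix.mul_smul, Matrix.smul_mul, Finset.smul_sum, RingHom.id_apply]

/-- The cone `∑ p, (V p)ᵀ (DNN) (V p)` generated by the congruences by `V p` of doubly nonnegative
matrices. -/
def congruenceCone [Fintype ι] (V : ι → Matrix m n ℝ) : PointedCone ℝ (Matrix n n ℝ) :=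
  PointedCone.map (congruenceSum V) (Submodule.pi univ fun _ => doublyNonneg m)

variable [Fintype ι] {V : ι → Matrix m n ℝ}

theorem mem_congruenceCone {X : Matrix n n ℝ} :
    X ∈ congruenceCone V ↔
      ∃ S : ι → Matrix m m ℝ, (∀ p, S p ∈ doublyNonneg m) ∧ ∑ p, (V p)ᵀ * S p * V p = X := by
  simp [congruenceCone, congruenceSum, PointedCone.mem_map, Submodule.mem_pi]

theorem isClosed_congruenceCone [Finite n] (hV : ∀ p a k, 0 ≤ V p a k) :
    IsClosed (congruenceCone V : Set (Matrix n n ℝ)) := by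
  have := Fintype.ofFinite n
  have hcont : Continuous (congruenceSum V) := by
    change Continuous fun S : ι → Matrix m m ℝ => ∑ p, (V p)ᵀ * S p * V p
    fun_prop
  have hentry : Continuous (entrySum : Matrix n n ℝ → ℝ) := by
    unfold entrySum
    fun_prop
  refine isClosed_of_forall_isCompact_sublevel hentry fun r => ?_
  let B (p : ι) : Matrix m m ℝ := of fun a b => r * ((V p *ᵥ 1) a)⁻¹ * ((V p *ᵥ 1) b)⁻¹
  refine ⟨congruenceSum V '' univ.pi fun p => {T | T ∈ doublyNonneg m ∧ ∀ a b, T a b ≤ B p a b},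
    ?_, (isCompact_univ_pi fun p => isCompact_setOf_mem_doublyNonneg_le (B p)).image hcont, ?_⟩
  · rintro _ ⟨T, hT, rfl⟩
    exact mem_congruenceCone.2 ⟨T, fun p => (hT p trivial).1, rfl⟩
  · intro X hX hXr
    obtain ⟨S, hS, rfl⟩ := mem_congruenceCone.1 hX
    have hsummand (p : ι) : entrySum ((V p)ᵀ * S p * V p) ≤ r := by
      refine le_trans ?_ ((entrySum_sum _ _).symm.trans_le hXr)
      exact Finset.single_le_sum (f := fun p => entrySum ((V p)ᵀ * S p * V p))
        (fun p _ => entrySum_nonneg (transpose_mul_mul_mem_doublyNonneg (hS p) (hV p)).2)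
        (Finset.mem_univ p)
    choose T hT hTS hTle using fun p =>
      exists_doublyNonneg_le_of_entrySum_le (hS p) (hV p) (hsummand p)
    exact ⟨T, fun p _ => ⟨hT p, hTle p⟩, Finset.sum_congr rfl fun p _ => hTS p⟩

end Congruence

theorem congruenceCone_subset_CP {ι : Type*} [Fintype ι] {n : ℕ}
    {V : ι → Matrix (Fin 2) (Fin n) ℝ} (hV : ∀ p a k, 0 ≤ V p a k) :
    (congruenceCone V : Set (Matrix (Fin n) (Fin n) ℝ)) ⊆ CP n := by
  intro X hX
  obtain ⟨S, hS, rfl⟩ := mem_congruenceCone.1 hX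
  choose B hB hBS using fun p => exists_nonneg_transpose_mul_self_eq (hS p)
  have hfactor (p : ι) : (V p)ᵀ * S p * V p = (B p * V p)ᵀ * (B p * V p) := by
    rw [← hBS p]
    simp only [transpose_mul, Matrix.mul_assoc]
  simp only [hfactor]
  refine sum_transpose_mul_self_mem_CP _ fun p a k => ?_
  rw [mul_apply]
  exact Finset.sum_nonneg fun b _ => mul_nonneg (hB p a b) (hV p b k)

section ScaledDiagonallyDominant

variable {t n : ℕ}

/-- The index set of the pairs `i < j` in the sum defining `SDD t`. -/
abbrev StrictPair (t : ℕ) : Type := {p : Fin t × Fin t // p.1 < p.2}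

theorem sum_sum_ite_lt_eq_sum_strictPair {M : Type*} [AddCommMonoid M] (f : Fin t → Fin t → M) :
    (∑ i, ∑ j, if i < j then f i j else 0) = ∑ p : StrictPair t, f p.1.1 p.1.2 := by
  rw [← Fintype.sum_prod_type', ← Finset.sum_filter]
  exact Finset.sum_subtype _ (by simp) fun p : Fin t × Fin t => f p.1 p.2

theorem mem_SDD_iff {Y : Matrix (Fin t) (Fin t) ℝ} :
    Y ∈ SDD t ↔ ∃ S : StrictPair t → Matrix (Fin 2) (Fin 2) ℝ,
      (∀ p, (S p).PosSemidef) ∧ Y = ∑ p, iota p.1.1 p.1.2 (S p) := by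
  constructor
  · rintro ⟨S, hS, rfl⟩
    exact ⟨fun p => S p.1.1 p.1.2, fun p => hS _ _,
      sum_sum_ite_lt_eq_sum_strictPair fun i j => iota i j (S i j)⟩
  · rintro ⟨S, hS, rfl⟩
    refine ⟨fun i j => if h : i < j then S ⟨(i, j), h⟩ else 0, fun i j => ?_, ?_⟩
    · dsimp only
      split_ifs
      exacts [hS _, .zero]
    · rw [sum_sum_ite_lt_eq_sum_strictPair fun i j =>
        iota i j (if h : i < j then S ⟨(i, j), h⟩ else 0)]
      exact Finset.sum_congr rfl fun p _ => by rw [dif_pos p.2]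

/-- The `2 × n` matrix formed by the rows `p.1` and `p.2` of `U`. -/
def pairRows (U : Matrix (Fin t) (Fin n) ℝ) (p : StrictPair t) : Matrix (Fin 2) (Fin n) ℝ :=
  U.submatrix ![p.1.1, p.1.2] id

theorem pairRows_nonneg {U : Matrix (Fin t) (Fin n) ℝ} (hU : ∀ i k, 0 ≤ U i k) (p : StrictPair t)
    (a : Fin 2) (k : Fin n) : 0 ≤ pairRows U p a k :=
  hU _ _

theorem iota_eq_transpose_pairRows_mul_mul (p : StrictPair t) (S : Matrix (Fin 2) (Fin 2) ℝ) :
    iota p.1.1 p.1.2 S = (pairRows 1 p)ᵀ * S * pairRows 1 p := by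
  ext r s
  simp only [iota, pairRows, mul_apply, Fin.sum_univ_two, transpose_apply, of_apply,
    submatrix_apply, cons_val_zero, cons_val_one, one_apply, id, ite_and]
  split_ifs <;> grind

theorem transpose_mul_iota_mul (U : Matrix (Fin t) (Fin n) ℝ) (p : StrictPair t)
    (S : Matrix (Fin 2) (Fin 2) ℝ) :
    Uᵀ * iota p.1.1 p.1.2 S * U = (pairRows U p)ᵀ * S * pairRows U p := by
  have hrows : pairRows U p = pairRows (1 : Matrix (Fin t) (Fin t) ℝ) p * U := by
    simpa [pairRows] using (one_submatrix_mul ![p.1.1, p.1.2] (Equiv.refl (Fin t)) U).symm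
  rw [iota_eq_transpose_pairRows_mul_mul, hrows]
  simp only [transpose_mul, Matrix.mul_assoc]

theorem sum_iota_apply (S : StrictPair t → Matrix (Fin 2) (Fin 2) ℝ) (p : StrictPair t) :
    (∑ q, iota q.1.1 q.1.2 (S q)) p.1.1 p.1.2 = S p 0 1 := by
  rw [Matrix.sum_apply, Fintype.sum_eq_single p]
  · simp [iota, p.2.ne, p.2.ne']
  · rintro ⟨⟨k, l⟩, hkl⟩ hq
    obtain ⟨⟨i, j⟩, hij⟩ := p
    simp only [iota, of_apply]
    grind

theorem sum_iota_mem_NonnegMat_iff {S : StrictPair t → Matrix (Fin 2) (Fin 2) ℝ}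
    (hS : ∀ p, (S p).PosSemidef) :
    ∑ p, iota p.1.1 p.1.2 (S p) ∈ NonnegMat t ↔ ∀ p, S p ∈ doublyNonneg (Fin 2) := by
  constructor
  · intro hY p
    have hoff : 0 ≤ S p 0 1 := by
      rw [← sum_iota_apply S p]
      exact hY.2 _ _
    have hsymm : S p 1 0 = S p 0 1 := by simpa using (hS p).isHermitian.apply 0 1
    refine ⟨hS p, fun a b => ?_⟩
    fin_cases a <;> fin_cases b
    exacts [(hS p).diag_nonneg, hoff, hoff.trans_eq hsymm.symm, (hS p).diag_nonneg]
  · intro hDNN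
    have hsum : ∑ p, iota p.1.1 p.1.2 (S p) ∈ doublyNonneg (Fin t) := by
      simp only [iota_eq_transpose_pairRows_mul_mul]
      exact Submodule.sum_mem _ fun p _ => transpose_mul_mul_mem_doublyNonneg (hDNN p)
        (pairRows_nonneg (fun i k => by rw [one_apply]; split_ifs <;> norm_num) p)
    exact ⟨by simpa using hsum.1.isHermitian, hsum.2⟩

theorem mem_SDDplus_iff {Y : Matrix (Fin t) (Fin t) ℝ} :
    Y ∈ SDDplus t ↔ ∃ S : StrictPair t → Matrix (Fin 2) (Fin 2) ℝ,
      (∀ p, S p ∈ doublyNonneg (Fin 2)) ∧ Y = ∑ p, iota p.1.1 p.1.2 (S p) := by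
  constructor
  · rintro ⟨hY, hYnonneg⟩
    obtain ⟨S, hS, rfl⟩ := mem_SDD_iff.1 hY
    exact ⟨S, (sum_iota_mem_NonnegMat_iff hS).1 hYnonneg, rfl⟩
  · rintro ⟨S, hS, rfl⟩
    have hpsd (p : StrictPair t) : (S p).PosSemidef := (hS p).1
    exact ⟨mem_SDD_iff.2 ⟨S, hpsd, rfl⟩, (sum_iota_mem_NonnegMat_iff hpsd).2 hS⟩

theorem SDDplusU_eq_congruenceCone (U : Matrix (Fin t) (Fin n) ℝ) :
    SDDplusU U = congruenceCone (pairRows U) := by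
  have hcongr (S : StrictPair t → Matrix (Fin 2) (Fin 2) ℝ) :
      Uᵀ * (∑ p, iota p.1.1 p.1.2 (S p)) * U = ∑ p, (pairRows U p)ᵀ * S p * pairRows U p := by
    simp only [Matrix.mul_sum, Matrix.sum_mul, transpose_mul_iota_mul]
  ext X
  constructor
  · rintro ⟨_, hY, rfl⟩
    obtain ⟨S, hS, rfl⟩ := mem_SDDplus_iff.1 hY
    exact mem_congruenceCone.2 ⟨S, hS, (hcongr S).symm⟩
  · intro hX
    obtain ⟨S, hS, rfl⟩ := mem_congruenceCone.1 hX
    exact ⟨_, mem_SDDplus_iff.2 ⟨S, hS, rfl⟩, (hcongr S).symm⟩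

end ScaledDiagonallyDominant

theorem SDDplusU_closed_subcone_CP_general {t n : ℕ} (U : Matrix (Fin t) (Fin n) ℝ)
    (hU : ∀ i j, 0 ≤ U i j) :
    IsClosed (SDDplusU U) ∧
    (∀ X ∈ SDDplusU U, ∀ Y ∈ SDDplusU U, X + Y ∈ SDDplusU U) ∧
    (∀ c : ℝ, 0 ≤ c → ∀ X ∈ SDDplusU U, c • X ∈ SDDplusU U) ∧
    SDDplusU U ⊆ CP n := by
  rw [SDDplusU_eq_congruenceCone]
  exact ⟨isClosed_congruenceCone (pairRows_nonneg hU), fun X hX Y hY => add_mem hX hY,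
    fun c hc X hX => PointedCone.smul_mem _ hc hX, congruenceCone_subset_CP (pairRows_nonneg hU)⟩

/-- `SDDⁿ₊(U)` is a closed convex sub-cone of the completely positive cone `CPⁿ`. -/
theorem SDDplusU_closed_subcone_CP {t n : ℕ} (U : Matrix (Fin t) (Fin n) ℝ)
    (hU : ∀ i j, 0 ≤ U i j) (hrow : ∀ i, ∑ j, U i j = 1) :
    IsClosed (SDDplusU U) ∧
    (∀ X ∈ SDDplusU U, ∀ Y ∈ SDDplusU U, X + Y ∈ SDDplusU U) ∧
    (∀ c : ℝ, 0 ≤ c → ∀ X ∈ SDDplusU U, c • X ∈ SDDplusU U) ∧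
    SDDplusU U ⊆ CP n :=
  SDDplusU_closed_subcone_CP_general U hU

end
end

section
/- Let G be a graph on vertices {1,…,t} with edge set E, and let U ∈ R^{t×n} have nonnegative entries with each row summing to 1. Then SDD^G_+(U) := U^T (SDD^G_+) U is a closed convex sub-cone of the completely positive cone CP^n. -/
open Matrix Set

noncomputable section

open scoped Classical in
/-- `SDD^G = Σ_{{i,j}∈E} ι_{ij}(S²₊)` (equal to `{0}` if `E = ∅`). -/
def SDDG {t : ℕ} (G : SimpleGraph (Fin t)) : Set (Matrix (Fin t) (Fin t) ℝ) :=
  {X | ∃ S : Fin t → Fin t → Matrix (Fin 2) (Fin 2) ℝ,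
    (∀ i j : Fin t, (S i j).PosSemidef) ∧
    X = ∑ i : Fin t, ∑ j : Fin t, if i < j ∧ G.Adj i j then iota i j (S i j) else 0}

/-- `SDD^G₊ = SDD^G ∩ Nᵗ`. -/
def SDDGplus {t : ℕ} (G : SimpleGraph (Fin t)) : Set (Matrix (Fin t) (Fin t) ℝ) :=
  SDDG G ∩ NonnegMat t

/-- `SDD^G₊(U) = Uᵀ (SDD^G₊) U`. -/
def SDDGplusU {t n : ℕ} (G : SimpleGraph (Fin t)) (U : Matrix (Fin t) (Fin n) ℝ) :
    Set (Matrix (Fin n) (Fin n) ℝ) :=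
  {X | ∃ Y ∈ SDDGplus G, X = Uᵀ * Y * U}

/-- `seg(G,U) = ∪_{{i,j}∈E} [uᵢ, uⱼ]`. -/
def seg {t n : ℕ} (G : SimpleGraph (Fin t)) (U : Matrix (Fin t) (Fin n) ℝ) :
    Set (Fin n → ℝ) :=
  {v | ∃ i j : Fin t, G.Adj i j ∧ v ∈ segment ℝ (U i) (U j)}

/-! `SDD^G₊` is the sum, over the edges of `G`, of embedded copies of the cone of `2 × 2` doubly
nonnegative matrices: distinct edges own distinct off-diagonal positions, so nonnegativity of the
sum forces it on each block. Hence `SDD^G₊(U)` is the sum over the edges `{i, j}` of the images of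
that cone under `S ↦ Pᵀ * S * P`, where `P` has rows `uᵢ, uⱼ`. If these rows are independent, the
map has a continuous left inverse and the image is closed; otherwise the image is a ray. A finite
sum of closed cones of positive semidefinite matrices is closed because the trace has compact
sublevel sets on such cones. Finally, `2 × 2` doubly nonnegative matrices are completely positive,
by completing the square, and complete positivity survives `S ↦ Pᵀ * S * P` for `P ≥ 0`. -/

section Topology

variable {E : Type*} [TopologicalSpace E]

lemma isClosed_of_forall_isClosed_inter_le {s : Set E} {f : E → ℝ} (hf : Continuous f)
    (h : ∀ c, IsClosed (s ∩ {x | f x ≤ c})) : IsClosed s := by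
  refine isClosed_of_closure_subset fun x hx => ?_
  have hopen : IsOpen {y | f y < f x + 1} := isOpen_lt hf continuous_const
  have hx' : x ∈ closure ({y | f y < f x + 1} ∩ s) := hopen.inter_closure ⟨by simp, hx⟩
  have hsub : {y | f y < f x + 1} ∩ s ⊆ s ∩ {y | f y ≤ f x + 1} :=
    fun y hy => ⟨hy.2, (mem_ofPred.1 hy.1).le⟩
  exact (closure_minimal hsub (h _) hx').1

open scoped Pointwise in
lemma isClosed_add_of_isCompact_sublevel [AddMonoid E] [ContinuousAdd E] [T2Space E]
    {f : E →+ ℝ} (hf : Continuous f) {s t : Set E}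
    (hs : ∀ x ∈ s, 0 ≤ f x) (ht : ∀ x ∈ t, 0 ≤ f x)
    (hsc : ∀ c, IsCompact (s ∩ {x | f x ≤ c})) (htc : ∀ c, IsCompact (t ∩ {x | f x ≤ c})) :
    IsClosed (s + t) := by
  refine isClosed_of_forall_isClosed_inter_le hf fun c => ?_
  have hsublevel : (s + t) ∩ {x | f x ≤ c} =
      (s ∩ {x | f x ≤ c} + t ∩ {x | f x ≤ c}) ∩ {x | f x ≤ c} := by
    refine Subset.antisymm ?_ (inter_subset_inter_left _ (add_subset_add inter_subset_left
      inter_subset_left))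
    rintro _ ⟨⟨x, hx, y, hy, rfl⟩, hxy⟩
    have hxy' : f x + f y ≤ c := by simpa using hxy
    have := hs x hx
    have := ht y hy
    exact ⟨⟨x, ⟨hx, show f x ≤ c by linarith⟩, y, ⟨hy, show f y ≤ c by linarith⟩, rfl⟩, hxy⟩
  rw [hsublevel]
  exact ((hsc c).add (htc c)).isClosed.inter (isClosed_le hf continuous_const)

end Topology

section Congruence

variable {m n o : Type*} [Fintype m]

/-- The congruence transformation `A ↦ Pᵀ * A * P` as a linear map. -/
def congruence (P : Matrix m n ℝ) : Matrix m m ℝ →ₗ[ℝ] Matrix n n ℝ :=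
  mulRightLinearMap n ℝ P ∘ₗ mulLeftLinearMap m ℝ Pᵀ

@[simp]
lemma congruence_apply (P : Matrix m n ℝ) (A : Matrix m m ℝ) : congruence P A = Pᵀ * A * P := rfl

lemma congruence_comp_congruence [Fintype n] (P : Matrix m n ℝ) (Q : Matrix n o ℝ) :
    congruence Q ∘ₗ congruence P = congruence (P * Q) :=
  LinearMap.ext fun A => by simp [Matrix.mul_assoc]

lemma continuous_congruence (P : Matrix m n ℝ) : Continuous (congruence P) :=
  (continuous_const.matrix_mul continuous_id).matrix_mul continuous_const

lemma congruence_vecMulVec (a : m → ℝ) (w : n → ℝ) (A : Matrix m m ℝ) :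
    congruence (vecMulVec a w) A = (a ⬝ᵥ A *ᵥ a) • vecMulVec w w := by
  rw [congruence_apply, transpose_vecMulVec, vecMulVec_mul, vecMulVec_mul_vecMulVec,
    dotProduct_mulVec, vecMulVec_smul]

end Congruence

section Cones

variable {m n : Type*}

lemma sq_apply_le_of_posSemidef {A : Matrix m m ℝ} (hA : A.PosSemidef) (i j : m) :
    A i j ^ 2 ≤ A i i * A j j := by
  have hdet := (hA.submatrix ![i, j]).det_nonneg
  have hsymm : A j i = A i j := by simpa using hA.1.apply i j
  simp only [det_fin_two, submatrix_apply, cons_val_zero, cons_val_one, hsymm] at hdet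
  linarith

variable (m) in
/-- The cone `S^m₊` of positive semidefinite matrices. -/
def psdCone : PointedCone ℝ (Matrix m m ℝ) where
  carrier := {A | A.PosSemidef}
  zero_mem' := PosSemidef.zero
  add_mem' := PosSemidef.add
  smul_mem' c _ hA := hA.smul c.2

variable (m) in
/-- The cone of doubly nonnegative matrices: positive semidefinite and entrywise nonnegative. -/
def dnnCone : PointedCone ℝ (Matrix m m ℝ) where
  carrier := {A | A.PosSemidef ∧ ∀ i j, 0 ≤ A i j}
  zero_mem' := ⟨PosSemidef.zero, fun _ _ => le_rfl⟩
  add_mem' hA hB := ⟨hA.1.add hB.1, fun i j => add_nonneg (hA.2 i j) (hB.2 i j)⟩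
  smul_mem' c _ hA := ⟨hA.1.smul c.2, fun i j => mul_nonneg c.2 (hA.2 i j)⟩

lemma mem_psdCone {A : Matrix m m ℝ} : A ∈ psdCone m ↔ A.PosSemidef := Iff.rfl

lemma mem_dnnCone {A : Matrix m m ℝ} : A ∈ dnnCone m ↔ A.PosSemidef ∧ ∀ i j, 0 ≤ A i j := Iff.rfl

lemma mem_dnnCone_fin_two {S : Matrix (Fin 2) (Fin 2) ℝ} (hS : S.PosSemidef) (h : 0 ≤ S 0 1) :
    S ∈ dnnCone (Fin 2) := by
  have hsymm : S 1 0 = S 0 1 := by simpa using hS.1.apply 0 1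
  simpa [mem_dnnCone, Fin.forall_fin_two, hsymm, h, hS] using ⟨hS.diag_nonneg, hS.diag_nonneg⟩

lemma dnnCone_le_psdCone : dnnCone m ≤ psdCone m := fun _ hA => hA.1

lemma isClosed_setOf_posSemidef_s10 : IsClosed {A : Matrix m m ℝ | A.PosSemidef} := by
  simp only [PosSemidef, IsHermitian, ofPred_and, ofPred_forall]
  exact (isClosed_eq continuous_id.matrix_conjTranspose continuous_id).inter <|
    isClosed_iInter fun x => isClosed_le continuous_const <|
      continuous_finsetSum _ fun i _ => continuous_finsetSum _ fun j _ =>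
        (continuous_const.mul (continuous_id.matrix_elem i j)).mul continuous_const

lemma isClosed_dnnCone : IsClosed (dnnCone m : Set (Matrix m m ℝ)) := by
  have hnonneg : IsClosed {A : Matrix m m ℝ | ∀ i j, 0 ≤ A i j} := by
    simp only [ofPred_forall]
    exact isClosed_iInter fun i => isClosed_iInter fun j =>
      isClosed_le continuous_const (continuous_id.matrix_elem i j)
  exact isClosed_setOf_posSemidef_s10.inter hnonneg

variable [Fintype m]

lemma abs_apply_le_trace_of_posSemidef {A : Matrix m m ℝ} (hA : A.PosSemidef) (i j : m) :
    |A i j| ≤ A.trace := by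
  have hdiag (k : m) : A k k ≤ A.trace :=
    Finset.single_le_sum (f := fun k => A k k) (fun _ _ => hA.diag_nonneg) (Finset.mem_univ k)
  refine abs_le_of_sq_le_sq ?_ hA.trace_nonneg
  calc A i j ^ 2 ≤ A i i * A j j := sq_apply_le_of_posSemidef hA i j
    _ ≤ A.trace * A.trace := mul_le_mul (hdiag i) (hdiag j) hA.diag_nonneg hA.trace_nonneg
    _ = A.trace ^ 2 := (sq _).symm

lemma map_congruence_psdCone_le [Finite n] (P : Matrix m n ℝ) :
    (psdCone m).map (congruence P) ≤ psdCone n := by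
  rintro _ ⟨A, hA, rfl⟩
  exact (mem_psdCone.1 hA).conjTranspose_mul_mul_same P

lemma map_congruence_dnnCone_le [Finite n] {P : Matrix m n ℝ} (hP : ∀ i j, 0 ≤ P i j) :
    (dnnCone m).map (congruence P) ≤ dnnCone n := by
  rintro _ ⟨A, hA, rfl⟩
  refine ⟨map_congruence_psdCone_le P ⟨A, hA.1, rfl⟩, fun r s => ?_⟩
  exact Finset.sum_nonneg fun j _ => mul_nonneg
    (Finset.sum_nonneg fun i _ => mul_nonneg (hP i r) (hA.2 i j)) (hP j s)

lemma isCompact_inter_trace_le {s : Set (Matrix m m ℝ)} (hs : IsClosed s)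
    (hpsd : ∀ A ∈ s, A.PosSemidef) (c : ℝ) : IsCompact (s ∩ {A | A.trace ≤ c}) := by
  have hbox : IsCompact (univ.pi fun _ => univ.pi fun _ => Icc (-c) c : Set (Matrix m m ℝ)) :=
    isCompact_univ_pi fun _ => isCompact_univ_pi fun _ => isCompact_Icc
  refine hbox.of_isClosed_subset
    (hs.inter (isClosed_le continuous_id.matrix_trace continuous_const)) ?_
  rintro A ⟨hA, hc⟩ i - j -
  exact abs_le.1 ((abs_apply_le_trace_of_posSemidef (hpsd A hA) i j).trans hc)

end Cones

section ConeSums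

variable {m : Type*} [Finite m]

lemma isClosed_sup_of_le_psdCone {C D : PointedCone ℝ (Matrix m m ℝ)}
    (hC : IsClosed (C : Set (Matrix m m ℝ))) (hD : IsClosed (D : Set (Matrix m m ℝ)))
    (hCpsd : C ≤ psdCone m) (hDpsd : D ≤ psdCone m) :
    IsClosed ((C ⊔ D : PointedCone ℝ (Matrix m m ℝ)) : Set (Matrix m m ℝ)) := by
  cases nonempty_fintype m
  rw [Submodule.coe_sup]
  exact isClosed_add_of_isCompact_sublevel (f := traceAddMonoidHom m ℝ)
    continuous_id.matrix_trace (fun A hA => (hCpsd hA).trace_nonneg)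
    (fun A hA => (hDpsd hA).trace_nonneg) (isCompact_inter_trace_le hC hCpsd)
    (isCompact_inter_trace_le hD hDpsd)

lemma isClosed_biSup_of_le_psdCone {ι : Type*} (s : Finset ι)
    {C : ι → PointedCone ℝ (Matrix m m ℝ)} (hC : ∀ i ∈ s, IsClosed (C i : Set (Matrix m m ℝ)))
    (hpsd : ∀ i ∈ s, C i ≤ psdCone m) :
    IsClosed ((⨆ i ∈ s, C i : PointedCone ℝ (Matrix m m ℝ)) : Set (Matrix m m ℝ)) := by
  have hsup : IsClosed ((s.sup C : PointedCone ℝ (Matrix m m ℝ)) : Set (Matrix m m ℝ)) ∧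
      s.sup C ≤ psdCone m :=
    Finset.sup_induction (f := C)
      (p := fun D => IsClosed (D : Set (Matrix m m ℝ)) ∧ D ≤ psdCone m)
      ⟨by simp, bot_le⟩
      (fun _ hD _ hD' => ⟨isClosed_sup_of_le_psdCone hD.1 hD'.1 hD.2 hD'.2, sup_le hD.2 hD'.2⟩)
      fun i hi => ⟨hC i hi, hpsd i hi⟩
  simpa only [Finset.sup_eq_iSup] using hsup.1

end ConeSums

section CongruenceImages

variable {m n : Type*} [Fintype m]

lemma coe_map_congruence_vecMulVec_dnnCone {a : m → ℝ} (ha : a ≠ 0) (w : n → ℝ) :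
    ((dnnCone m).map (congruence (vecMulVec a w)) : Set (Matrix n n ℝ)) =
      (fun q : ℝ => q • vecMulVec w w) '' Ici 0 := by
  classical
  ext X
  constructor
  · rintro ⟨A, hA, rfl⟩
    exact ⟨_, by simpa using hA.1.dotProduct_mulVec_nonneg a, (congruence_vecMulVec a w A).symm⟩
  · rintro ⟨q, hq, rfl⟩
    obtain ⟨i, hi⟩ := Function.ne_iff.1 ha
    have hd : 0 ≤ (Pi.single i (q / a i ^ 2) : m → ℝ) := by
      simpa using div_nonneg hq (sq_nonneg (a i))
    have hquad : a ⬝ᵥ diagonal (Pi.single i (q / a i ^ 2)) *ᵥ a = q := by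
      have hai : a i ≠ 0 := hi
      simp only [dotProduct, mulVec_diagonal, Pi.single_apply, ite_mul, zero_mul, mul_ite, mul_zero,
        Finset.sum_ite_eq', Finset.mem_univ, if_true]
      field_simp
    refine ⟨diagonal (Pi.single i (q / a i ^ 2)), ⟨.diagonal hd, fun r s => ?_⟩, ?_⟩
    · rw [diagonal_apply]
      split_ifs
      exacts [hd r, le_rfl]
    · exact (congruence_vecMulVec a w _).trans (by rw [hquad])

lemma isClosed_map_congruence_vecMulVec_dnnCone {a : m → ℝ} (ha : a ≠ 0) (w : n → ℝ) :
    IsClosed ((dnnCone m).map (congruence (vecMulVec a w)) : Set (Matrix n n ℝ)) := by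
  rw [coe_map_congruence_vecMulVec_dnnCone ha]
  exact isClosedMap_smul_left (𝕜 := ℝ) (vecMulVec w w) _ isClosed_Ici

lemma isClosed_map_congruence_of_linearIndependent [Finite n] {P : Matrix m n ℝ}
    (hP : LinearIndependent ℝ P.row) {C : PointedCone ℝ (Matrix m m ℝ)}
    (hC : IsClosed (C : Set (Matrix m m ℝ))) :
    IsClosed (C.map (congruence P) : Set (Matrix n n ℝ)) := by
  classical
  cases nonempty_fintype n
  have hunit : IsUnit (P * Pᵀ) :=
    (PosDef.mul_conjTranspose_self P (vecMul_injective_iff.2 hP)).isUnit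
  have hright : P * (Pᵀ * (P * Pᵀ)⁻¹) = 1 := by
    rw [← Matrix.mul_assoc, mul_nonsing_inv _ ((isUnit_iff_isUnit_det _).1 hunit)]
  have hleft : Function.LeftInverse (congruence (Pᵀ * (P * Pᵀ)⁻¹)) (congruence P) := fun A => by
    rw [← LinearMap.comp_apply, congruence_comp_congruence, hright]
    simp
  exact (hleft.isClosedEmbedding (continuous_congruence _)
    (continuous_congruence P)).isClosedMap _ hC

lemma isClosed_map_congruence_dnnCone_fin_two [Finite n] (P : Matrix (Fin 2) n ℝ) :
    IsClosed ((dnnCone (Fin 2)).map (congruence P) : Set (Matrix n n ℝ)) := by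
  by_cases hP : LinearIndependent ℝ P.row
  · exact isClosed_map_congruence_of_linearIndependent hP isClosed_dnnCone
  obtain ⟨a, ha, w, rfl⟩ : ∃ a : Fin 2 → ℝ, a ≠ 0 ∧ ∃ w : n → ℝ, P = vecMulVec a w := by
    rw [linearIndependent_fin2] at hP
    by_cases h1 : P.row 1 = 0
    · refine ⟨![1, 0], by simp, P.row 0, ?_⟩
      ext i j
      fin_cases i
      · simp [vecMulVec_apply]
      · simpa [vecMulVec_apply] using congr_fun h1 j
    · obtain ⟨c, hc⟩ : ∃ c : ℝ, c • P.row 1 = P.row 0 := by simpa [h1] using hP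
      refine ⟨![c, 1], by simp, P.row 1, ?_⟩
      ext i j
      fin_cases i
      · simpa [vecMulVec_apply] using (congr_fun hc j).symm
      · simp [vecMulVec_apply]
  exact isClosed_map_congruence_vecMulVec_dnnCone ha w

end CongruenceImages

section CompletelyPositive

variable {m n : ℕ}

lemma transpose_mul_self_mem_CP {ι : Type*} [Fintype ι] {B : Matrix ι (Fin n) ℝ}
    (hB : ∀ i j, 0 ≤ B i j) : Bᵀ * B ∈ CP n := by
  classical
  refine ⟨Fintype.card ι, B.submatrix (Fintype.equivFin ι).symm id, fun i j => hB _ j, ?_⟩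
  rw [transpose_submatrix, submatrix_mul_equiv, submatrix_id_id]

variable (n) in
/-- The completely positive cone `CP n` as a pointed cone. -/
def cpCone : PointedCone ℝ (Matrix (Fin n) (Fin n) ℝ) where
  carrier := CP n
  zero_mem' := ⟨0, 0, by simp, by simp⟩
  add_mem' := by
    rintro _ _ ⟨k, B, hB, rfl⟩ ⟨l, C, hC, rfl⟩
    rw [← fromCols_mul_fromRows, ← transpose_fromRows]
    exact transpose_mul_self_mem_CP (Sum.rec hB hC)
  smul_mem' := by
    rintro c _ ⟨k, B, hB, rfl⟩
    refine ⟨k, √(c : ℝ) • B, fun i j => mul_nonneg (Real.sqrt_nonneg _) (hB i j), ?_⟩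
    rw [transpose_smul, Matrix.smul_mul, Matrix.mul_smul, smul_smul, Real.mul_self_sqrt c.2]
    rfl

lemma vecMulVec_self_mem_cpCone {v : Fin n → ℝ} (hv : ∀ i, 0 ≤ v i) :
    vecMulVec v v ∈ cpCone n := by
  rw [vecMulVec_eq Unit, ← transpose_replicateRow]
  exact transpose_mul_self_mem_CP fun _ => hv

lemma map_congruence_cpCone_le {P : Matrix (Fin m) (Fin n) ℝ} (hP : ∀ i j, 0 ≤ P i j) :
    (cpCone m).map (congruence P) ≤ cpCone n := by
  rintro _ ⟨_, ⟨k, B, hB, rfl⟩, rfl⟩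
  refine ⟨k, B * P, fun i j => ?_, ?_⟩
  · rw [Matrix.mul_apply]
    exact Finset.sum_nonneg fun l _ => mul_nonneg (hB i l) (hP l j)
  · simp [Matrix.mul_assoc]

lemma dnnCone_fin_two_le_cpCone : dnnCone (Fin 2) ≤ cpCone 2 := by
  rintro S ⟨hS, hnonneg⟩
  have hsymm : S 1 0 = S 0 1 := by simpa using hS.1.apply 0 1
  have hsq : S 0 1 ^ 2 ≤ S 1 1 * S 0 0 := by
    simpa [mul_comm] using sq_apply_le_of_posSemidef hS 0 1
  have hschur : 0 ≤ S 1 1 - S 0 1 ^ 2 / S 0 0 :=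
    sub_nonneg.2 (div_le_of_le_mul₀ (hnonneg 0 0) (hnonneg 1 1) hsq)
  -- Complete the square; when `S 0 0 = 0` also `S 0 1 = 0`, and the junk value `0⁻¹ = 0` is right.
  have hdecomp : S = (S 0 0)⁻¹ • vecMulVec (S 0) (S 0) +
      (S 1 1 - S 0 1 ^ 2 / S 0 0) • vecMulVec ![0, 1] ![0, 1] := by
    have hzero : S 0 0 = 0 → S 0 1 = 0 := fun h => by simpa [h, sq_nonpos_iff] using hsq
    ext i j
    by_cases h : S 0 0 = 0
    · fin_cases i <;> fin_cases j <;> simp [hsymm, hzero, h]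
    · fin_cases i <;> fin_cases j <;> simp [vecMulVec_apply, hsymm, h] <;> grind
  rw [hdecomp]
  exact add_mem
    ((cpCone 2).smul_mem (inv_nonneg.2 (hnonneg 0 0)) (vecMulVec_self_mem_cpCone (hnonneg 0)))
    ((cpCone 2).smul_mem hschur (vecMulVec_self_mem_cpCone (by simp [Fin.forall_fin_two])))

end CompletelyPositive

section BlockCone

variable {m n : Type*}

/-- The cone `∑_{(i,j) ∈ E} Pᵢⱼᵀ K Pᵢⱼ`, where `Pᵢⱼ` consists of the rows `i` and `j` of `U`. For
`U = 1` the `(i,j)` summand is the embedded copy `ι_{ij}(K)`. -/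
def blockCone (E : Finset (m × m)) (K : PointedCone ℝ (Matrix (Fin 2) (Fin 2) ℝ))
    (U : Matrix m n ℝ) : PointedCone ℝ (Matrix n n ℝ) :=
  ⨆ p ∈ E, K.map (congruence (U.submatrix ![p.1, p.2] id))

variable {E : Finset (m × m)} {K : PointedCone ℝ (Matrix (Fin 2) (Fin 2) ℝ)} {U : Matrix m n ℝ}

lemma mem_blockCone {X : Matrix n n ℝ} :
    X ∈ blockCone E K U ↔ ∃ S : m → m → Matrix (Fin 2) (Fin 2) ℝ, (∀ i j, S i j ∈ K) ∧
      X = ∑ p ∈ E, congruence (U.submatrix ![p.1, p.2] id) (S p.1 p.2) := by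
  constructor
  · intro hX
    obtain ⟨μ, rfl⟩ := (Submodule.mem_iSup_finset_iff_exists_sum _ _).1 hX
    choose S hS hμ using fun p => (μ p).2
    exact ⟨fun i j => S (i, j), fun i j => hS (i, j), Finset.sum_congr rfl fun p _ => (hμ p).symm⟩
  · rintro ⟨S, hS, rfl⟩
    exact Submodule.sum_mem_biSup fun p _ => ⟨S p.1 p.2, hS _ _, rfl⟩

lemma map_congruence_blockCone_one [Fintype m] [DecidableEq m] :
    (blockCone E K (1 : Matrix m m ℝ)).map (congruence U) = blockCone E K U := by
  have hrows (p : m × m) : (1 : Matrix m m ℝ).submatrix ![p.1, p.2] id * U =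
      U.submatrix ![p.1, p.2] id :=
    one_submatrix_mul _ (Equiv.refl m) U
  have hmap (p : m × m) :
      (K.map (congruence ((1 : Matrix m m ℝ).submatrix ![p.1, p.2] id))).map (congruence U) =
        K.map (congruence (U.submatrix ![p.1, p.2] id)) := by
    rw [PointedCone.map_map, congruence_comp_congruence, hrows]
  calc (blockCone E K (1 : Matrix m m ℝ)).map (congruence U)
      = ⨆ p ∈ E, (K.map (congruence ((1 : Matrix m m ℝ).submatrix ![p.1, p.2] id))).map
          (congruence U) := by simp only [blockCone, PointedCone.map, Submodule.map_iSup]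
    _ = blockCone E K U := by simp only [blockCone, hmap]

lemma isClosed_blockCone_dnnCone [Finite n] :
    IsClosed (blockCone E (dnnCone (Fin 2)) U : Set (Matrix n n ℝ)) :=
  isClosed_biSup_of_le_psdCone E (fun _ _ => isClosed_map_congruence_dnnCone_fin_two _)
    fun _ _ => (Submodule.map_mono dnnCone_le_psdCone).trans (map_congruence_psdCone_le _)

lemma blockCone_dnnCone_le_cpCone {n : ℕ} {U : Matrix m (Fin n) ℝ} (hU : ∀ i j, 0 ≤ U i j) :
    blockCone E (dnnCone (Fin 2)) U ≤ cpCone n :=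
  iSup₂_le fun _ _ => (Submodule.map_mono dnnCone_fin_two_le_cpCone).trans <|
    map_congruence_cpCone_le fun _ _ => hU _ _

lemma blockCone_dnnCone_le_dnnCone [Finite n] (hU : ∀ i j, 0 ≤ U i j) :
    blockCone E (dnnCone (Fin 2)) U ≤ dnnCone n :=
  iSup₂_le fun _ _ => map_congruence_dnnCone_le fun _ _ => hU _ _

end BlockCone

section Graph

variable {t n : ℕ}

lemma iota_eq_congruence (i j : Fin t) (S : Matrix (Fin 2) (Fin 2) ℝ) :
    iota i j S = congruence ((1 : Matrix (Fin t) (Fin t) ℝ).submatrix ![i, j] id) S := by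
  ext r s
  simp only [iota, congruence_apply, Matrix.mul_apply, Fin.sum_univ_two, of_apply, transpose_apply,
    submatrix_apply, one_apply, cons_val_zero, cons_val_one, id, ite_and]
  grind

lemma iota_apply_of_lt_s10 {p q : Fin t × Fin t} (hp : p.1 < p.2) (hq : q.1 < q.2)
    (S : Matrix (Fin 2) (Fin 2) ℝ) :
    iota p.1 p.2 S q.1 q.2 = if p = q then S 0 1 else 0 := by
  simp only [iota, of_apply, Prod.ext_iff]
  split_ifs <;> first | omega | simp

open scoped Classical in
/-- The edges of `G`, each listed once as a pair `(i, j)` with `i < j`. -/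
def orderedEdges (G : SimpleGraph (Fin t)) : Finset (Fin t × Fin t) :=
  {p | p.1 < p.2 ∧ G.Adj p.1 p.2}

variable (G : SimpleGraph (Fin t))

lemma mem_orderedEdges {p : Fin t × Fin t} :
    p ∈ orderedEdges G ↔ p.1 < p.2 ∧ G.Adj p.1 p.2 := by
  simp [orderedEdges]

lemma lt_of_mem_orderedEdges {p : Fin t × Fin t} (hp : p ∈ orderedEdges G) : p.1 < p.2 :=
  (mem_orderedEdges G).1 hp |>.1

lemma SDDG_eq_blockCone :
    SDDG G = blockCone (orderedEdges G) (psdCone (Fin 2)) (1 : Matrix (Fin t) (Fin t) ℝ) := by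
  ext X
  simp only [SDDG, SetLike.mem_coe, mem_blockCone, mem_psdCone, orderedEdges, Finset.sum_filter,
    Fintype.sum_prod_type, iota_eq_congruence]
  rfl

lemma sum_iota_apply_of_lt {E : Finset (Fin t × Fin t)} (hE : ∀ p ∈ E, p.1 < p.2)
    (S : Fin t → Fin t → Matrix (Fin 2) (Fin 2) ℝ) {p : Fin t × Fin t} (hp : p ∈ E) :
    (∑ q ∈ E, iota q.1 q.2 (S q.1 q.2)) p.1 p.2 = S p.1 p.2 0 1 := by
  rw [Matrix.sum_apply, Finset.sum_congr rfl fun q hq => iota_apply_of_lt_s10 (hE q hq) (hE p hp) _]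
  simp [hp]

lemma mem_blockCone_dnnCone_of_nonneg {E : Finset (Fin t × Fin t)} (hE : ∀ p ∈ E, p.1 < p.2)
    {X : Matrix (Fin t) (Fin t) ℝ} (hX : X ∈ blockCone E (psdCone (Fin 2)) 1)
    (hnonneg : ∀ i j, 0 ≤ X i j) : X ∈ blockCone E (dnnCone (Fin 2)) 1 := by
  obtain ⟨S, hS, rfl⟩ := mem_blockCone.1 hX
  refine Submodule.sum_mem_biSup fun p hp => ⟨S p.1 p.2, ?_, rfl⟩
  have hentry := hnonneg p.1 p.2
  simp only [← iota_eq_congruence, sum_iota_apply_of_lt hE S hp] at hentry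
  exact mem_dnnCone_fin_two (hS _ _) hentry

lemma SDDGplus_eq_blockCone :
    SDDGplus G = blockCone (orderedEdges G) (dnnCone (Fin 2)) (1 : Matrix (Fin t) (Fin t) ℝ) := by
  rw [SDDGplus, SDDG_eq_blockCone]
  refine Subset.antisymm (fun X hX => mem_blockCone_dnnCone_of_nonneg
    (fun _ => lt_of_mem_orderedEdges G) hX.1 hX.2.2) fun X hX => ?_
  have hdnn : X ∈ dnnCone (Fin t) :=
    blockCone_dnnCone_le_dnnCone (fun _ _ => by rw [one_apply]; positivity) hX
  exact ⟨iSup₂_mono (fun _ _ => Submodule.map_mono dnnCone_le_psdCone) hX, hdnn.1.1, hdnn.2⟩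

lemma SDDGplusU_eq_blockCone (U : Matrix (Fin t) (Fin n) ℝ) :
    SDDGplusU G U = blockCone (orderedEdges G) (dnnCone (Fin 2)) U := by
  rw [← map_congruence_blockCone_one, PointedCone.coe_map, ← SDDGplus_eq_blockCone]
  ext X
  simp [SDDGplusU, eq_comm]

end Graph

theorem SDDGplusU_closed_subcone_CP_general {t n : ℕ} (G : SimpleGraph (Fin t))
    (U : Matrix (Fin t) (Fin n) ℝ) (hU : ∀ i j, 0 ≤ U i j) :
    IsClosed (SDDGplusU G U) ∧
    (∀ X ∈ SDDGplusU G U, ∀ Y ∈ SDDGplusU G U, X + Y ∈ SDDGplusU G U) ∧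
    (∀ c : ℝ, 0 ≤ c → ∀ X ∈ SDDGplusU G U, c • X ∈ SDDGplusU G U) ∧
    SDDGplusU G U ⊆ CP n := by
  rw [SDDGplusU_eq_blockCone]
  exact ⟨isClosed_blockCone_dnnCone, fun _ hX _ hY => add_mem hX hY,
    fun _ hc _ hX => PointedCone.smul_mem _ hc hX, blockCone_dnnCone_le_cpCone hU⟩

/-- `SDD^G₊(U)` is a closed convex sub-cone of the completely positive cone `CPⁿ`. -/
theorem SDDGplusU_closed_subcone_CP {t n : ℕ} (G : SimpleGraph (Fin t))
    (U : Matrix (Fin t) (Fin n) ℝ)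
    (hU : ∀ i j, 0 ≤ U i j) (hrow : ∀ i, ∑ j, U i j = 1) :
    IsClosed (SDDGplusU G U) ∧
    (∀ X ∈ SDDGplusU G U, ∀ Y ∈ SDDGplusU G U, X + Y ∈ SDDGplusU G U) ∧
    (∀ c : ℝ, 0 ≤ c → ∀ X ∈ SDDGplusU G U, c • X ∈ SDDGplusU G U) ∧
    SDDGplusU G U ⊆ CP n :=
  SDDGplusU_closed_subcone_CP_general G U hU

end
end

section
/- Every 2×2 real symmetric matrix M that is positive semidefinite and entrywise nonnegative can be decomposed as M = vv^T + diag(a,b) for some vector v ∈ R² with nonnegative entries and some scalars a ≥ 0, b ≥ 0. -/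
open Matrix

/-!
One step of symmetric Gaussian elimination at a diagonal entry `M k k` of a positive semidefinite
matrix splits off a rank-one term and leaves a remainder of the form `Eᴴ * M * E`, hence again
positive semidefinite, whose `k`-th row and column vanish. For a `2 × 2` matrix such a remainder has
only one entry left, so it is diagonal. The rank-one term is `vvᵀ` for a nonnegative multiple `v` of
a column of `M`, so `v` inherits nonnegativity from the entries of `M`.
-/

section Field

variable {n R : Type*} [Field R]

/-- The Schur complement of the diagonal entry `M k k`, kept at full size: what remains of `M`
after eliminating with the pivot `M k k`. If the pivot is zero, this is `M` itself, as `0⁻¹ = 0`. -/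
def pivotComplement (M : Matrix n n R) (k : n) : Matrix n n R :=
  M - (M k k)⁻¹ • vecMulVec (M.col k) (M.row k)

variable [StarRing R] {M : Matrix n n R}

theorem pivotComplement_eq_conjTranspose_mul_mul [Fintype n] [DecidableEq n]
    (hM : M.IsHermitian) (k : n) :
    pivotComplement M k =
      (1 - (M k k)⁻¹ • vecMulVec (Pi.single k 1) (M.row k))ᴴ * M *
        (1 - (M k k)⁻¹ • vecMulVec (Pi.single k 1) (M.row k)) := by
  set P := (M k k)⁻¹ • vecMulVec (Pi.single k 1) (M.row k) with hP
  have mul_right : M * P = (M k k)⁻¹ • vecMulVec (M.col k) (M.row k) := by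
    rw [hP, mul_smul_comm, mul_vecMulVec, mulVec_single_one]
  have mul_left : Pᴴ * M = M * P := by
    have hrow : star (M.row k) = M.col k := funext fun i ↦ hM.apply i k
    have hpivot : star (M k k) = M k k := hM.apply k k
    rw [mul_right, hP, conjTranspose_smul, conjTranspose_vecMulVec, smul_mul_assoc,
      vecMulVec_mul, hrow, star_inv₀, hpivot, ← Pi.single_star, star_one, single_one_vecMul]
  have mul_both : M * P * P = M * P := by
    obtain hpivot | hpivot := eq_or_ne (M k k) 0
    · simp [hP, hpivot]
    · rw [mul_right, hP, smul_mul_smul_comm, vecMulVec_mul_vecMulVec, dotProduct_single_one]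
      simp [smul_smul, hpivot]
  rw [conjTranspose_sub, conjTranspose_one, sub_mul, one_mul, mul_left, mul_sub, mul_one, sub_mul,
    mul_both, sub_self, sub_zero, mul_right, pivotComplement]

theorem posSemidef_pivotComplement [Finite n] [PartialOrder R] (hM : M.PosSemidef) (k : n) :
    (pivotComplement M k).PosSemidef := by
  classical
  have := Fintype.ofFinite n
  rw [pivotComplement_eq_conjTranspose_mul_mul hM.isHermitian]
  exact hM.conjTranspose_mul_mul_same _

end Field

section RCLike

open scoped ComplexOrder

variable {n 𝕜 : Type*} [Finite n] [RCLike 𝕜] {M : Matrix n n 𝕜}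

theorem col_eq_zero_of_posSemidef_of_diag_eq_zero (hM : M.PosSemidef) {k : n} (hk : M k k = 0) :
    M.col k = 0 := by
  classical
  have := Fintype.ofFinite n
  rw [← mulVec_single_one, ← hM.dotProduct_mulVec_zero_iff]
  simpa [← Pi.single_star] using hk

theorem pivotComplement_apply_pivot_right (hM : M.PosSemidef) (i k : n) :
    pivotComplement M k i k = 0 := by
  obtain hk | hk := eq_or_ne (M k k) 0
  · have hcol : M i k = 0 := congrFun (col_eq_zero_of_posSemidef_of_diag_eq_zero hM hk) i
    simp [pivotComplement, vecMulVec_apply, hcol]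
  · simp [pivotComplement, vecMulVec_apply, mul_comm (M i k), hk]

theorem pivotComplement_apply_pivot_left (hM : M.PosSemidef) (k j : n) :
    pivotComplement M k k j = 0 := by
  rw [← (posSemidef_pivotComplement hM k).isHermitian.apply,
    pivotComplement_apply_pivot_right hM, star_zero]

theorem pivotComplement_fin_two_eq_diagonal {M : Matrix (Fin 2) (Fin 2) 𝕜} (hM : M.PosSemidef) :
    pivotComplement M 0 = diagonal ![0, pivotComplement M 0 1 1] := by
  ext i j
  fin_cases i <;> fin_cases j <;>
    simp [pivotComplement_apply_pivot_left hM, pivotComplement_apply_pivot_right hM]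

end RCLike

theorem eq_vecMulVec_self_add_pivotComplement {n : Type*} {M : Matrix n n ℝ} (hM : M.IsHermitian)
    {k : n} (hk : 0 ≤ M k k) :
    M = vecMulVec ((√(M k k))⁻¹ • M.col k) ((√(M k k))⁻¹ • M.col k) + pivotComplement M k := by
  have hrow : M.row k = M.col k := funext fun i ↦ hM.apply i k
  rw [pivotComplement, hrow, smul_vecMulVec, vecMulVec_smul, smul_smul, ← mul_inv,
    Real.mul_self_sqrt hk, add_sub_cancel]

/-- Every 2×2 real symmetric PSD entrywise nonnegative matrix `M` can be written as
`M = vvᵀ + diag(a, b)` with `v ≥ 0`, `a ≥ 0`, `b ≥ 0`. -/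
theorem psd_nonneg_two_by_two_decomp (M : Matrix (Fin 2) (Fin 2) ℝ)
    (hpsd : M.PosSemidef) (hnn : ∀ i j, 0 ≤ M i j) :
    ∃ (v : Fin 2 → ℝ) (a b : ℝ), (∀ i, 0 ≤ v i) ∧ 0 ≤ a ∧ 0 ≤ b ∧
      M = vecMulVec v v + Matrix.diagonal ![a, b] := by
  refine ⟨(√(M 0 0))⁻¹ • M.col 0, 0, pivotComplement M 0 1 1, fun i ↦ ?_, le_rfl,
    (posSemidef_pivotComplement hpsd 0).diag_nonneg, ?_⟩
  · exact mul_nonneg (inv_nonneg.mpr (Real.sqrt_nonneg _)) (hnn i 0)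
  · rw [← pivotComplement_fin_two_eq_diagonal hpsd]
    exact eq_vecMulVec_self_add_pivotComplement hpsd.isHermitian (hnn 0 0)
end
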